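/- arXiv:1904.09055 — 3 statements merged into one kernel-verified Lean document; each statement's English description precedes it below -/
import Mathlib

section
/- In the full twist word FT_n = [i_1, …, i_{n(n−1)}], every pair of strands crosses exactly twice: with π_k the partial permutations of FT_n, for every pair a ≠ b in {1, …, n} the number of indices k ∈ {1, …, n(n−1)} such that {π_{k−1}(a), π_{k−1}(b)} = {i_k, i_k + 1} is exactly 2. -/
/-- The underlying permutation of a positive braid word `[i₁, …, i_ℓ]`:
the composite `s_{i_ℓ} ∘ ⋯ ∘ s_{i_1}` of the adjacent transpositions
`s_i = (i, i+1)`.  In particular, for the word `w.take k` this is the partial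
permutation `π_k`, so the strand starting at top position `a` occupies position
`braidPerm (w.take k) a` after the first `k` crossings. -/
def braidPerm : List ℕ → Equiv.Perm ℕ
  | [] => 1
  | i :: w => braidPerm w * Equiv.swap i (i + 1)

/-- The full twist word `FT_n` on `n` strands: the concatenation of `n` copies of
the word `[1, 2, …, n−1]`; it has length `n(n−1)`. -/
def fullTwistWord (n : ℕ) : List ℕ :=
  (List.replicate n ((List.range (n - 1)).map (· + 1))).flatten

/-!
One copy of `[1, …, n−1]` carries the strand in position `1` across every other strand to
position `n`, while each other strand moves down one position; no other crossing takes place.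
Hence a copy acts on positions as the `n`-cycle `x ↦ x − 1` modulo `n`, and it crosses two given
strands exactly when one of them starts in position `1`. During `n` copies each strand starts
exactly once in position `1`, so each of the two strands contributes one crossing.
-/

theorem braidPerm_append (u v : List ℕ) : braidPerm (u ++ v) = braidPerm v * braidPerm u := by
  induction u with
  | nil => simp [braidPerm]
  | cons i u ih => simp [braidPerm, ih, mul_assoc]

theorem braidPerm_flatten_replicate (r : ℕ) (w : List ℕ) :
    braidPerm (List.replicate r w).flatten = braidPerm w ^ r := by
  induction r with
  | zero => simp [braidPerm]
  | succ r ih => simp [List.replicate_succ, braidPerm_append, ih, pow_succ]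

/-- The number of crossings in `w` between the strands with top positions `a` and `b`. Crossings
are indexed from `0`, and the equality of unordered pairs is the paper's
`{π_k(a), π_k(b)} = {i, i + 1}`, where `i` is the letter with index `k`. -/
def crossCount (w : List ℕ) (a b : ℕ) : ℕ :=
  ((Finset.range w.length).filter fun k =>
    s(braidPerm (w.take k) a, braidPerm (w.take k) b) = s(w.getD k 0, w.getD k 0 + 1)).card

theorem crossCount_nil (a b : ℕ) : crossCount [] a b = 0 := rfl

theorem crossCount_cons (i : ℕ) (w : List ℕ) (a b : ℕ) :
    crossCount (i :: w) a b = (if s(a, b) = s(i, i + 1) then 1 else 0) +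
      crossCount w (Equiv.swap i (i + 1) a) (Equiv.swap i (i + 1) b) := by
  simp only [crossCount, Finset.card_filter, List.length_cons, Finset.sum_range_succ']
  rw [add_comm]
  rfl

theorem crossCount_append (u v : List ℕ) (a b : ℕ) :
    crossCount (u ++ v) a b = crossCount u a b + crossCount v (braidPerm u a) (braidPerm u b) := by
  induction u generalizing a b with
  | nil => simp [crossCount_nil, braidPerm]
  | cons i u ih => simp [crossCount_cons, braidPerm, ih, add_assoc]

theorem crossCount_flatten_replicate (r : ℕ) (w : List ℕ) (a b : ℕ) :
    crossCount (List.replicate r w).flatten a b =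
      ∑ j ∈ Finset.range r, crossCount w ((braidPerm w ^ j) a) ((braidPerm w ^ j) b) := by
  induction r with
  | zero => rfl
  | succ r ih =>
    rw [List.replicate_succ', List.flatten_concat, crossCount_append, ih,
      braidPerm_flatten_replicate, Finset.sum_range_succ]

theorem card_filter_Icc_eq_crossCount (w : List ℕ) (a b : ℕ) :
    ((Finset.Icc 1 w.length).filter fun k =>
      s(braidPerm (w.take (k - 1)) a, braidPerm (w.take (k - 1)) b) =
        s(w.getD (k - 1) 0, w.getD (k - 1) 0 + 1)).card = crossCount w a b := by
  simp only [crossCount, Finset.card_filter, ← Finset.Ico_add_one_right_eq_Icc,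
    Finset.sum_Ico_eq_sum_range, add_tsub_cancel_left, add_tsub_cancel_right]

theorem braidPerm_range'_apply (s m x : ℕ) :
    braidPerm (List.range' s m) x =
      if x = s then s + m else if s < x ∧ x ≤ s + m then x - 1 else x := by
  induction m generalizing s x with
  | zero => simp only [List.range'_zero, braidPerm, Equiv.Perm.one_apply]; split_ifs <;> omega
  | succ m ih =>
    simp only [List.range'_succ, braidPerm, Equiv.Perm.mul_apply, ih, Equiv.swap_apply_def]
    split_ifs <;> omega

theorem crossCount_range' (s m x y : ℕ) :
    crossCount (List.range' s m) x y =
      if (x = s ∧ s < y ∧ y ≤ s + m) ∨ (y = s ∧ s < x ∧ x ≤ s + m) then 1 else 0 := by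
  induction m generalizing s x y with
  | zero => rw [List.range'_zero, crossCount_nil, if_neg (by omega)]
  | succ m ih =>
    simp only [List.range'_succ, crossCount_cons, ih, Sym2.eq_iff, Equiv.swap_apply_def]
    split_ifs <;> omega

section Sweep

variable {s m x y : ℕ}

theorem crossCount_range'_of_mem_Icc (hx : x ∈ Set.Icc s (s + m)) (hy : y ∈ Set.Icc s (s + m))
    (hxy : x ≠ y) :
    crossCount (List.range' s m) x y = (if x = s then 1 else 0) + (if y = s then 1 else 0) := by
  rw [Set.mem_Icc] at hx hy
  rw [crossCount_range']
  split_ifs <;> omega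

theorem braidPerm_range'_mapsTo_Icc (s m : ℕ) :
    Set.MapsTo (braidPerm (List.range' s m)) (Set.Icc s (s + m)) (Set.Icc s (s + m)) := by
  intro x hx
  rw [Set.mem_Icc] at hx ⊢
  rw [braidPerm_range'_apply]
  split_ifs <;> omega

theorem braidPerm_range'_pow_mem_Icc (hx : x ∈ Set.Icc s (s + m)) (j : ℕ) :
    (braidPerm (List.range' s m) ^ j) x ∈ Set.Icc s (s + m) := by
  rw [Equiv.Perm.coe_pow]
  exact (braidPerm_range'_mapsTo_Icc s m).iterate j hx

theorem braidPerm_range'_add_one_modEq (hx : x ∈ Set.Icc s (s + m)) :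
    braidPerm (List.range' s m) x + 1 ≡ x [MOD m + 1] := by
  obtain ⟨hsx, hxm⟩ := hx
  rw [braidPerm_range'_apply]
  obtain rfl | hlt := hsx.eq_or_lt
  · rw [if_pos rfl, add_assoc]
    exact Nat.add_modEq_right
  · rw [if_neg hlt.ne', if_pos ⟨hlt, hxm⟩, Nat.sub_add_cancel (by omega)]

theorem braidPerm_range'_pow_add_modEq (hx : x ∈ Set.Icc s (s + m)) (j : ℕ) :
    (braidPerm (List.range' s m) ^ j) x + j ≡ x [MOD m + 1] := by
  induction j with
  | zero => rfl
  | succ j ih =>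
    rw [pow_succ', Equiv.Perm.mul_apply, add_comm j, ← add_assoc]
    have hstep := braidPerm_range'_add_one_modEq (braidPerm_range'_pow_mem_Icc hx j)
    exact (hstep.add_right j).trans ih

theorem braidPerm_range'_pow_eq_iff (hx : x ∈ Set.Icc s (s + m)) (j : ℕ) :
    (braidPerm (List.range' s m) ^ j) x = s ↔ j ≡ x - s [MOD m + 1] := by
  have hmod := braidPerm_range'_pow_add_modEq hx j
  obtain ⟨hs, hm⟩ := braidPerm_range'_pow_mem_Icc hx j
  set p := (braidPerm (List.range' s m) ^ j) x
  have hshift : (p - s) + j ≡ x - s [MOD m + 1] := by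
    apply Nat.ModEq.add_left_cancel' s
    rwa [← add_assoc, Nat.add_sub_cancel' hs, Nat.add_sub_cancel' hx.1]
  constructor
  · intro hp
    simpa [hp] using hshift
  · intro hj
    have hzero : p - s ≡ 0 [MOD m + 1] :=
      Nat.ModEq.add_right_cancel' j (by simpa using hshift.trans hj.symm)
    have hsub : p - s = 0 := hzero.eq_of_lt_of_lt (by omega) (by omega)
    omega

theorem crossCount_flatten_replicate_range' (hx : x ∈ Set.Icc s (s + m))
    (hy : y ∈ Set.Icc s (s + m)) (hxy : x ≠ y) (r : ℕ) :
    crossCount (List.replicate r (List.range' s m)).flatten x y =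
      r.count (· ≡ x - s [MOD m + 1]) + r.count (· ≡ y - s [MOD m + 1]) := by
  have hcross (j : ℕ) := crossCount_range'_of_mem_Icc (braidPerm_range'_pow_mem_Icc hx j)
    (braidPerm_range'_pow_mem_Icc hy j) ((braidPerm (List.range' s m) ^ j).injective.ne hxy)
  simp only [crossCount_flatten_replicate, hcross, braidPerm_range'_pow_eq_iff hx,
    braidPerm_range'_pow_eq_iff hy, Finset.sum_add_distrib, Nat.count_eq_card_filter_range,
    Finset.card_filter]

end Sweep

theorem fullTwistWord_eq_flatten_replicate_range' (n : ℕ) :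
    fullTwistWord n = (List.replicate n (List.range' 1 (n - 1))).flatten := by
  simp [fullTwistWord, List.range'_eq_map_range, add_comm]

theorem length_fullTwistWord (n : ℕ) : (fullTwistWord n).length = n * (n - 1) := by
  simp [fullTwistWord]

theorem crossCount_fullTwistWord {n a b : ℕ} (ha : a ∈ Set.Icc 1 n) (hb : b ∈ Set.Icc 1 n)
    (hab : a ≠ b) : crossCount (fullTwistWord n) a b = 2 := by
  obtain ⟨m, rfl⟩ : ∃ m, n = 1 + m := Nat.exists_eq_add_of_le (ha.1.trans ha.2)
  have hcount (v : ℕ) : (1 + m).count (· ≡ v [MOD m + 1]) = 1 := by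
    simp [Nat.count_modEq_card, add_comm 1 m]
  rw [fullTwistWord_eq_flatten_replicate_range', add_tsub_cancel_left,
    crossCount_flatten_replicate_range' ha hb hab, hcount, hcount]

/-- In the full twist word `FT_n = [i₁, …, i_{n(n−1)}]`, every pair
of strands crosses exactly twice: for all `a ≠ b` in `{1, …, n}`, the number of indices
`k ∈ {1, …, n(n−1)}` such that `{π_{k−1} a, π_{k−1} b} = {i_k, i_k + 1}` is exactly `2`
(here `π_{k−1} = braidPerm (w.take (k−1))` and `i_k` is the `(k−1)`-st entry of the
word). -/
theorem fullTwist_pair_crosses_twice (n : ℕ) (hn : 1 ≤ n) (a b : ℕ)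
    (ha1 : 1 ≤ a) (han : a ≤ n) (hb1 : 1 ≤ b) (hbn : b ≤ n) (hab : a ≠ b) :
    ((Finset.Icc 1 (n * (n - 1))).filter (fun k =>
      (braidPerm ((fullTwistWord n).take (k - 1)) a = (fullTwistWord n).getD (k - 1) 0 ∧
        braidPerm ((fullTwistWord n).take (k - 1)) b = (fullTwistWord n).getD (k - 1) 0 + 1) ∨
      (braidPerm ((fullTwistWord n).take (k - 1)) a = (fullTwistWord n).getD (k - 1) 0 + 1 ∧
        braidPerm ((fullTwistWord n).take (k - 1)) b = (fullTwistWord n).getD (k - 1) 0))).card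
      = 2 := by
  simp only [← Sym2.eq_iff]
  rw [← length_fullTwistWord, card_filter_Icc_eq_crossCount]
  exact crossCount_fullTwistWord ⟨ha1, han⟩ ⟨hb1, hbn⟩ hab
end

section
/- Let w = [i_1, …, i_ℓ] be a positive braid word on n strands with coloring γ having no uni-colored crossings (i.e. γ(k−1)(i_k) ≠ γ(k−1)(i_k+1) for every k). Then strands of equal color never change their relative order: for all positions a < b in {1, …, n} with γ(a) = γ(b), and for every 0 ≤ k ≤ ℓ, one has π_k(a) < π_k(b). -/
/-- A positive braid word with top coloring `γ` has no uni-colored crossings: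
at every crossing of the word (read top to bottom), the two colors involved are
different. -/
def NoUnicolored (γ : ℕ → ℕ) : List ℕ → Prop
  | [] => True
  | i :: w => γ i ≠ γ (i + 1) ∧ NoUnicolored (fun p => γ (Equiv.swap i (i + 1) p)) w

theorem strictMonoOn_swap_of_covBy {α : Type*} [LinearOrder α] {i j : α} {s : Set α}
    (hij : i ⋖ j) (hs : ¬(i ∈ s ∧ j ∈ s)) : StrictMonoOn (Equiv.swap i j) s := by
  intro a ha b hb hab
  have hpair : ¬(a = i ∧ b = j) := by
    rintro ⟨rfl, rfl⟩
    exact hs ⟨ha, hb⟩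
  have hij_lt : i < j := hij.lt
  have le_of_lt_right : a < j → a ≤ i := hij.le_of_lt
  have ge_of_gt_left : i < b → j ≤ b := hij.ge_of_gt
  simp only [Equiv.swap_apply_def]
  grind

namespace NoUnicolored

variable {γ : ℕ → ℕ} {w : List ℕ}

theorem take (h : NoUnicolored γ w) (k : ℕ) : NoUnicolored γ (w.take k) := by
  induction w generalizing γ k with
  | nil => simpa only [List.take_nil] using h
  | cons i w ih =>
    cases k with
    | zero => exact trivial
    | succ k => exact ⟨h.1, ih h.2 k⟩

theorem strictMonoOn_braidPerm (h : NoUnicolored γ w) (c : ℕ) :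
    StrictMonoOn (braidPerm w) (γ ⁻¹' {c}) := by
  induction w generalizing γ with
  | nil => exact strictMono_id.strictMonoOn _
  | cons i w ih =>
    obtain ⟨hne, hw⟩ := h
    have hswap : StrictMonoOn (Equiv.swap i (i + 1)) (γ ⁻¹' {c}) :=
      strictMonoOn_swap_of_covBy (Order.covBy_add_one i) fun ⟨hi, hj⟩ ↦ hne (hi.trans hj.symm)
    have hmaps : Set.MapsTo (Equiv.swap i (i + 1)) (γ ⁻¹' {c})
        ((fun p ↦ γ (Equiv.swap i (i + 1) p)) ⁻¹' {c}) := fun p hp ↦ by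
      simpa using hp
    exact (ih hw).comp hswap hmaps

end NoUnicolored

/-- In a positive braid word with coloring `γ` and no uni-colored
crossings, strands of equal color never change their relative order: if `a < b` are
positions in `{1, …, n}` with `γ a = γ b`, then `π_k a < π_k b` for every
`0 ≤ k ≤ ℓ`. -/
theorem equal_colors_preserve_order (n : ℕ) (hn : 1 ≤ n) (w : List ℕ)
    (hw : ∀ i ∈ w, 1 ≤ i ∧ i < n) (γ : ℕ → ℕ) (huni : NoUnicolored γ w)
    (a b : ℕ) (ha1 : 1 ≤ a) (hab : a < b) (hbn : b ≤ n) (hcol : γ a = γ b) :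
    ∀ k : ℕ, k ≤ w.length →
      braidPerm (w.take k) a < braidPerm (w.take k) b := by
  intro k _
  exact (huni.take k).strictMonoOn_braidPerm (γ b) hcol rfl hab
end

section
/- If w is a nonempty positive braid word on n strands whose underlying permutation is trivial (Φ(w) = id in S_n), then w is positively equivalent to a positive braid word containing two equal consecutive letters [i, i] for some i ∈ {1, …, n−1} (a clasp). -/
/-- One elementary substitution between positive braid words: replace a consecutive
subword `[i, j]` by `[j, i]` when `|i − j| ≥ 2`, or replace `[i, i+1, i]` by
`[i+1, i, i+1]` or vice versa. -/
inductive BraidMove : List ℕ → List ℕ → Prop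
  | comm (u v : List ℕ) (i j : ℕ) (hij : i + 2 ≤ j ∨ j + 2 ≤ i) :
      BraidMove (u ++ i :: j :: v) (u ++ j :: i :: v)
  | braid (u v : List ℕ) (i : ℕ) :
      BraidMove (u ++ i :: (i + 1) :: i :: v) (u ++ (i + 1) :: i :: (i + 1) :: v)
  | braid_inv (u v : List ℕ) (i : ℕ) :
      BraidMove (u ++ (i + 1) :: i :: (i + 1) :: v) (u ++ i :: (i + 1) :: i :: v)

/-- Positive equivalence of positive braid words: a finite sequence of elementary
substitutions. -/
def PosEquiv : List ℕ → List ℕ → Prop := Relation.ReflTransGen BraidMove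

/-!
A word in the letters `0, …, M` that is not positively equivalent to a word with a clasp is
equivalent to some `u ++ [M, M - 1, …, a]` with all letters of `u` below `M`: a letter appended to
such a word lengthens the run, creates a clasp, or slides through the run into `u`. The permutation
sends `M + 1` to `a`, hence determines the run and the permutation of `u`. By induction on `M`,
clasp-free words with the same permutation are positively equivalent, so they have the same length.
A word that is longer than some other word of the same permutation, such as a nonempty word with
trivial permutation, therefore acquires a clasp.
-/

theorem BraidMove.symm {w w' : List ℕ} (h : BraidMove w w') : BraidMove w' w := by
  cases h with
  | comm u v i j hij => exact .comm u v j i hij.symm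
  | braid u v i => exact .braid_inv u v i
  | braid_inv u v i => exact .braid u v i

theorem BraidMove.context {w w' : List ℕ} (h : BraidMove w w') (p q : List ℕ) :
    BraidMove (p ++ w ++ q) (p ++ w' ++ q) := by
  cases h with
  | comm u v i j hij => simpa using comm (p ++ u) (v ++ q) i j hij
  | braid u v i => simpa using braid (p ++ u) (v ++ q) i
  | braid_inv u v i => simpa using braid_inv (p ++ u) (v ++ q) i

theorem BraidMove.length_eq {w w' : List ℕ} (h : BraidMove w w') : w.length = w'.length := by
  cases h <;> simp

theorem BraidMove.mem_iff {w w' : List ℕ} (h : BraidMove w w') (x : ℕ) : x ∈ w ↔ x ∈ w' := by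
  cases h <;> grind

theorem braidPerm_pair_comm {i j : ℕ} (hij : i + 2 ≤ j ∨ j + 2 ≤ i) :
    braidPerm [i, j] = braidPerm [j, i] := by
  have hdisj : (Equiv.swap j (j + 1)).Disjoint (Equiv.swap i (i + 1)) :=
    Equiv.Perm.disjoint_swap_swap (by grind)
  simpa [braidPerm] using hdisj.commute.eq

theorem braidPerm_braid (i : ℕ) : braidPerm [i, i + 1, i] = braidPerm [i + 1, i, i + 1] := by
  have hleft := Equiv.swap_mul_swap_mul_swap (x := i + 2) (y := i + 1) (z := i)
    (by omega) (by omega)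
  have hright := Equiv.swap_mul_swap_mul_swap (x := i) (y := i + 1) (z := i + 2)
    (by omega) (by omega)
  rw [Equiv.swap_comm (i + 1) i, Equiv.swap_comm (i + 2) (i + 1)] at hleft
  simpa [braidPerm] using hleft.trans ((Equiv.swap_comm _ _).trans hright.symm)

theorem braidPerm_context_congr {s t : List ℕ} (h : braidPerm s = braidPerm t) (u v : List ℕ) :
    braidPerm (u ++ (s ++ v)) = braidPerm (u ++ (t ++ v)) := by
  simp only [braidPerm_append, h]

theorem BraidMove.braidPerm_eq {w w' : List ℕ} (h : BraidMove w w') :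
    braidPerm w = braidPerm w' := by
  cases h with
  | comm u v i j hij => exact braidPerm_context_congr (braidPerm_pair_comm hij) u v
  | braid u v i => exact braidPerm_context_congr (braidPerm_braid i) u v
  | braid_inv u v i => exact braidPerm_context_congr (braidPerm_braid i).symm u v

theorem braidPerm_clasp (u v : List ℕ) (i : ℕ) :
    braidPerm (u ++ i :: i :: v) = braidPerm (u ++ v) := by
  simp [braidPerm_append, braidPerm]

theorem braidPerm_apply_of_forall_succ_lt {u : List ℕ} {x : ℕ} (hu : ∀ i ∈ u, i + 1 < x) :
    braidPerm u x = x := by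
  induction u with
  | nil => rfl
  | cons i u ih =>
    obtain ⟨hi, hu⟩ := List.forall_mem_cons.1 hu
    rw [braidPerm, Equiv.Perm.mul_apply, Equiv.swap_apply_of_ne_of_ne (by omega) (by omega), ih hu]

namespace PosEquiv

variable {w w' : List ℕ}

theorem refl (w : List ℕ) : PosEquiv w w := Relation.ReflTransGen.refl

theorem of_braidMove (h : BraidMove w w') : PosEquiv w w' := Relation.ReflTransGen.single h

theorem trans {w'' : List ℕ} (h : PosEquiv w w') (h' : PosEquiv w' w'') : PosEquiv w w'' :=
  Relation.ReflTransGen.trans h h'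

instance : Trans PosEquiv PosEquiv PosEquiv := ⟨trans⟩

theorem symm (h : PosEquiv w w') : PosEquiv w' w := by
  induction h with
  | refl => exact .refl _
  | tail _ hmove ih => exact (of_braidMove hmove.symm).trans ih

theorem context (h : PosEquiv w w') (p q : List ℕ) : PosEquiv (p ++ w ++ q) (p ++ w' ++ q) := by
  induction h with
  | refl => exact .refl _
  | tail _ hmove ih => exact ih.trans (of_braidMove (hmove.context p q))

theorem append_left (h : PosEquiv w w') (p : List ℕ) : PosEquiv (p ++ w) (p ++ w') := by
  simpa using h.context p []

theorem append_right (h : PosEquiv w w') (q : List ℕ) : PosEquiv (w ++ q) (w' ++ q) :=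
  h.context [] q

theorem length_eq (h : PosEquiv w w') : w.length = w'.length := by
  induction h with
  | refl => rfl
  | tail _ hmove ih => exact ih.trans hmove.length_eq

theorem mem_iff (h : PosEquiv w w') (x : ℕ) : x ∈ w ↔ x ∈ w' := by
  induction h with
  | refl => rfl
  | tail _ hmove ih => exact ih.trans (hmove.mem_iff x)

theorem braidPerm_eq (h : PosEquiv w w') : braidPerm w = braidPerm w' := by
  induction h with
  | refl => rfl
  | tail _ hmove ih => exact ih.trans hmove.braidPerm_eq

end PosEquiv

theorem posEquiv_append_singleton_of_far {w : List ℕ} {i : ℕ}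
    (hw : ∀ j ∈ w, i + 2 ≤ j ∨ j + 2 ≤ i) : PosEquiv (w ++ [i]) (i :: w) := by
  induction w with
  | nil => exact .refl _
  | cons j w ih =>
    obtain ⟨hj, hw⟩ := List.forall_mem_cons.1 hw
    calc PosEquiv (j :: (w ++ [i])) (j :: i :: w) := (ih hw).append_left [j]
      PosEquiv _ (i :: j :: w) := .of_braidMove (.comm [] w j i hj.symm)

/-- The word `w` has a clasp up to positive equivalence: it is positively equivalent to a word with
two equal consecutive letters. -/
def HasClasp (w : List ℕ) : Prop :=
  ∃ (u v : List ℕ) (i : ℕ), PosEquiv w (u ++ i :: i :: v)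

namespace HasClasp

variable {w w' : List ℕ}

theorem of_posEquiv (h : PosEquiv w w') : HasClasp w' → HasClasp w
  | ⟨u, v, i, hclasp⟩ => ⟨u, v, i, h.trans hclasp⟩

theorem append_left (p : List ℕ) : HasClasp w → HasClasp (p ++ w)
  | ⟨u, v, i, hclasp⟩ => ⟨p ++ u, v, i, by simpa using hclasp.append_left p⟩

theorem append_right (q : List ℕ) : HasClasp w → HasClasp (w ++ q)
  | ⟨u, v, i, hclasp⟩ => ⟨u, v ++ q, i, by simpa using hclasp.append_right q⟩

end HasClasp

/-- The descending run `[a + k - 1, …, a + 1, a]` of `k` letters, whose permutation carries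
strand `a + k` down to `a`. -/
def descRun (a k : ℕ) : List ℕ := (List.range' a k).reverse

theorem mem_descRun {a k i : ℕ} : i ∈ descRun a k ↔ a ≤ i ∧ i < a + k := by
  simp [descRun]

theorem descRun_succ (a k : ℕ) : descRun a (k + 1) = (a + k) :: descRun a k := by
  simp [descRun, List.range'_1_concat]

theorem descRun_append (a k l : ℕ) : descRun (a + k) l ++ descRun a k = descRun a (k + l) := by
  simp [descRun, ← List.reverse_append]

theorem descRun_succ' (a k : ℕ) : descRun a (k + 1) = descRun (a + 1) k ++ [a] := by
  simp [descRun, List.range'_succ]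

theorem braidPerm_descRun_apply (a k : ℕ) : braidPerm (descRun a k) (a + k) = a := by
  induction k with
  | zero => rfl
  | succ k ih =>
    rw [descRun_succ, braidPerm, Equiv.Perm.mul_apply, ← add_assoc, Equiv.swap_apply_right, ih]

theorem posEquiv_descRun_append_singleton {a k i : ℕ} (hai : a ≤ i) (hik : i + 1 < a + k) :
    PosEquiv (descRun a k ++ [i + 1]) (i :: descRun a k) := by
  obtain ⟨c, rfl⟩ := Nat.exists_eq_add_of_le hai
  obtain ⟨d, rfl⟩ : ∃ d, k = c + 2 + d := Nat.exists_eq_add_of_le (by omega)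
  set low := descRun a c with hlow
  set high := descRun (a + c + 2) d with hhigh
  have hsplit : descRun a (c + 2 + d) = high ++ (a + c + 1) :: (a + c) :: low := by
    rw [← descRun_append, descRun_succ, descRun_succ]
    rfl
  have hlow_far : ∀ j ∈ low, a + c + 1 + 2 ≤ j ∨ j + 2 ≤ a + c + 1 := by
    intro j hj
    rw [hlow, mem_descRun] at hj
    omega
  have hhigh_far : ∀ j ∈ high, a + c + 2 ≤ j ∨ j + 2 ≤ a + c := by
    intro j hj
    rw [hhigh, mem_descRun] at hj
    omega
  rw [hsplit]
  calc PosEquiv (high ++ (a + c + 1) :: (a + c) :: low ++ [a + c + 1])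
        (high ++ (a + c + 1) :: (a + c) :: (a + c + 1) :: low) := by
        simpa using (posEquiv_append_singleton_of_far hlow_far).append_left
          (high ++ [a + c + 1, a + c])
    PosEquiv _ (high ++ (a + c) :: (a + c + 1) :: (a + c) :: low) :=
      .of_braidMove (.braid_inv high low (a + c))
    PosEquiv _ ((a + c) :: (high ++ (a + c + 1) :: (a + c) :: low)) := by
      simpa using (posEquiv_append_singleton_of_far hhigh_far).append_right
        ((a + c + 1) :: (a + c) :: low)

/-- The normal form for words in the letters `0, …, M`: up to positive equivalence, `w` is a word in
letters below `M` followed by a (possibly empty) descending run that starts at `M`. -/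
def EndsInRun (M : ℕ) (w : List ℕ) : Prop :=
  ∃ (u : List ℕ) (a k : ℕ), (∀ i ∈ u, i < M) ∧ a + k = M + 1 ∧ PosEquiv w (u ++ descRun a k)

namespace EndsInRun

variable {M : ℕ} {w w' : List ℕ}

theorem of_posEquiv (h : PosEquiv w w') : EndsInRun M w' → EndsInRun M w
  | ⟨u, a, k, hu, hak, hrun⟩ => ⟨u, a, k, hu, hak, h.trans hrun⟩

theorem append_left {p : List ℕ} (hp : ∀ i ∈ p, i < M) : EndsInRun M w → EndsInRun M (p ++ w)
  | ⟨u, a, k, hu, hak, hrun⟩ =>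
    ⟨p ++ u, a, k, List.forall_mem_append.2 ⟨hp, hu⟩, hak, by simpa using hrun.append_left p⟩

end EndsInRun

theorem hasClasp_or_endsInRun_descRun_append_singleton {M a k i : ℕ} (hak : a + k = M + 1)
    (hi : i ≤ M) : HasClasp (descRun a k ++ [i]) ∨ EndsInRun M (descRun a k ++ [i]) := by
  rcases (by omega : i + 2 ≤ a ∨ i + 1 = a ∨ i = a ∨ a < i) with hfar | rfl | rfl | hai
  · have hmove : PosEquiv (descRun a k ++ [i]) (i :: descRun a k) :=
      posEquiv_append_singleton_of_far fun j hj => .inl (hfar.trans (mem_descRun.1 hj).1)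
    exact .inr ⟨[i], a, k, by grind, hak, hmove⟩
  · exact .inr ⟨[], i, k + 1, by simp, by omega, by rw [descRun_succ']; exact .refl _⟩
  · obtain ⟨l, rfl⟩ : ∃ l, k = l + 1 := Nat.exists_eq_succ_of_ne_zero (by omega)
    exact .inl ⟨descRun (i + 1) l, [], i, by simpa [descRun_succ'] using .refl _⟩
  · obtain ⟨j, rfl⟩ : ∃ j, i = j + 1 := Nat.exists_eq_succ_of_ne_zero (by omega)
    have hslide : PosEquiv (descRun a k ++ [j + 1]) (j :: descRun a k) :=
      posEquiv_descRun_append_singleton (by omega) (by omega)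
    exact .inr ⟨[j], a, k, by grind, hak, hslide⟩

theorem hasClasp_or_endsInRun {M : ℕ} {w : List ℕ} (hw : ∀ i ∈ w, i ≤ M) :
    HasClasp w ∨ EndsInRun M w := by
  induction w using List.reverseRecOn with
  | nil => exact .inr ⟨[], M + 1, 0, by simp, rfl, .refl _⟩
  | append_singleton w i ih =>
    obtain ⟨hw, hi⟩ := List.forall_mem_append.1 hw
    rcases ih hw with hclasp | ⟨u, a, k, hu, hak, hrun⟩
    · exact .inl (hclasp.append_right [i])
    · have happend : PosEquiv (w ++ [i]) (u ++ (descRun a k ++ [i])) := by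
        simpa using hrun.append_right [i]
      exact (hasClasp_or_endsInRun_descRun_append_singleton hak (hi i (by simp))).imp
        (fun hclasp => (hclasp.append_left u).of_posEquiv happend)
        (fun hends => (hends.append_left hu).of_posEquiv happend)

theorem braidPerm_append_descRun_apply {M a k : ℕ} {u : List ℕ} (hu : ∀ i ∈ u, i < M)
    (hak : a + k = M + 1) : braidPerm (u ++ descRun a k) (M + 1) = a := by
  have hfix : braidPerm u (M + 1) = M + 1 :=
    braidPerm_apply_of_forall_succ_lt fun i hi => Nat.succ_lt_succ (hu i hi)
  rw [braidPerm_append, Equiv.Perm.mul_apply, hfix, ← hak, braidPerm_descRun_apply]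

theorem posEquiv_of_not_hasClasp_of_braidPerm_eq_of_forall_lt (m : ℕ) {w w' : List ℕ}
    (hw : ∀ i ∈ w, i < m) (hw' : ∀ i ∈ w', i < m) (hclasp : ¬HasClasp w)
    (hclasp' : ¬HasClasp w') (hperm : braidPerm w = braidPerm w') : PosEquiv w w' := by
  induction m generalizing w w' with
  | zero =>
    rw [List.eq_nil_iff_forall_not_mem.2 fun i hi => Nat.not_lt_zero i (hw i hi),
      List.eq_nil_iff_forall_not_mem.2 fun i hi => Nat.not_lt_zero i (hw' i hi)]
    exact .refl _
  | succ M ih =>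
    obtain ⟨u, a, k, hu, hak, hrun⟩ :=
      (hasClasp_or_endsInRun fun i hi => Nat.le_of_lt_succ (hw i hi)).resolve_left hclasp
    obtain ⟨u', a', k', hu', hak', hrun'⟩ :=
      (hasClasp_or_endsInRun fun i hi => Nat.le_of_lt_succ (hw' i hi)).resolve_left hclasp'
    have hperm_run : braidPerm (u ++ descRun a k) = braidPerm (u' ++ descRun a' k') := by
      rw [← hrun.braidPerm_eq, hperm, hrun'.braidPerm_eq]
    obtain rfl : a = a' := by
      rw [← braidPerm_append_descRun_apply hu hak, hperm_run,
        braidPerm_append_descRun_apply hu' hak']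
    obtain rfl : k = k' := by omega
    have hperm_u : braidPerm u = braidPerm u' := by
      simpa only [braidPerm_append, mul_right_inj] using hperm_run
    have hequiv_u : PosEquiv u u' := ih hu hu'
      (fun h => hclasp ((h.append_right _).of_posEquiv hrun))
      (fun h => hclasp' ((h.append_right _).of_posEquiv hrun')) hperm_u
    exact (hrun.trans (hequiv_u.append_right _)).trans hrun'.symm

theorem posEquiv_of_not_hasClasp_of_braidPerm_eq {w w' : List ℕ} (hclasp : ¬HasClasp w)
    (hclasp' : ¬HasClasp w') (hperm : braidPerm w = braidPerm w') : PosEquiv w w' := by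
  obtain ⟨m, hm⟩ := (w ++ w').toFinset.exists_nat_subset_range
  have hlt : ∀ i ∈ w ++ w', i < m := fun i hi =>
    Finset.mem_range.1 (hm (List.mem_toFinset.2 hi))
  obtain ⟨hw, hw'⟩ := List.forall_mem_append.1 hlt
  exact posEquiv_of_not_hasClasp_of_braidPerm_eq_of_forall_lt m hw hw' hclasp hclasp' hperm

theorem exists_not_hasClasp_braidPerm_eq (w : List ℕ) :
    ∃ w', ¬HasClasp w' ∧ w'.length ≤ w.length ∧ braidPerm w' = braidPerm w := by
  by_cases hclasp : HasClasp w
  · obtain ⟨u, v, i, hequiv⟩ := hclasp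
    have hlen : (u ++ v).length < w.length := by
      rw [hequiv.length_eq]
      simp only [List.length_append, List.length_cons]
      omega
    obtain ⟨w', hw', hle, hperm⟩ := exists_not_hasClasp_braidPerm_eq (u ++ v)
    exact ⟨w', hw', hle.trans hlen.le, by rw [hperm, hequiv.braidPerm_eq, braidPerm_clasp]⟩
  · exact ⟨w, hclasp, le_rfl, rfl⟩
termination_by w.length
decreasing_by exact hlen

theorem pure_posEquiv_clasp_general {w w₀ : List ℕ} (hlen : w₀.length < w.length)
    (hperm : braidPerm w₀ = braidPerm w) : HasClasp w := by
  by_contra hclasp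
  obtain ⟨w', hclasp', hle, hperm'⟩ := exists_not_hasClasp_braidPerm_eq w₀
  have hequiv : PosEquiv w w' :=
    posEquiv_of_not_hasClasp_of_braidPerm_eq hclasp hclasp' (hperm'.trans hperm).symm
  exact (hle.trans_lt hlen).ne' hequiv.length_eq

/-- A nonempty positive braid word on `n` strands whose underlying
permutation is trivial is positively equivalent to a positive braid word containing a
clasp: two equal consecutive letters `[i, i]` for some `i ∈ {1, …, n−1}`. -/
theorem pure_posEquiv_clasp (n : ℕ) (hn : 1 ≤ n) (w : List ℕ) (hne : w ≠ [])
    (hw : ∀ i ∈ w, 1 ≤ i ∧ i < n) (hpure : braidPerm w = 1) :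
    ∃ w' : List ℕ, PosEquiv w w' ∧
      ∃ (u v : List ℕ) (i : ℕ), w' = u ++ i :: i :: v ∧ 1 ≤ i ∧ i < n := by
  obtain ⟨u, v, i, h⟩ :=
    pure_posEquiv_clasp_general (w₀ := []) (List.length_pos_iff.2 hne) hpure.symm
  exact ⟨_, h, u, v, i, rfl, hw i ((h.mem_iff i).2 (by simp))⟩
end
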